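/- (Theorem 6.1 with the Remark 6.2 hypothesis, symmetric Asimov–Roth theorem.) Let S be a finite subgroup of O(d), Φ : S → Aut(G) a homomorphism, and (G,p) an S-symmetric framework of type Φ in ℝ^d whose points p_i affinely span ℝ^d. Suppose (G,p) admits no nonzero fully (S,Φ)-symmetric self-stress (equivalently, the rows of its orbit rigidity matrix are linearly independent) and (G,p) has a fully (S,Φ)-symmetric infinitesimal flex. Then (G,p) has a finite flex which preserves the symmetry of (G,p) throughout the path. -/

import Mathlib

open scoped Classical

noncomputable section

abbrev Euc (d : ℕ) : Type := EuclideanSpace ℝ (Fin d)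

/-- The subspace of points of `ℝ^d` fixed by a linear isometry (orthogonal transformation). -/
def fixedSpace {d : ℕ} (x : Euc d ≃ₗᵢ[ℝ] Euc d) : Submodule ℝ (Euc d) :=
  LinearMap.ker (x.toLinearEquiv.toLinearMap - LinearMap.id)

/-!
Squared edge lengths map the linear space `U` of symmetric configurations into the linear space `W`
of symmetric edge weights. A weight `ω ∈ W` orthogonal to the range of the derivative at `p` pairs
to zero with its own resultant force at `p`, which is itself a symmetric configuration; hence the
force vanishes, `ω` is a symmetric self-stress, and so `ω = 0`. The derivative `U → W` is therefore
onto, and the implicit function theorem makes every symmetric infinitesimal motion the velocity of a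
curve of symmetric configurations with constant edge lengths. An infinitesimal flex changes some
pairwise distance to first order, because points that affinely span the space and keep all their
distances to first order move by an infinitesimal isometry.
-/

open Filter Set Topology
open scoped RealInnerProductSpace

section Curves

variable {E F : Type*} [NormedAddCommGroup E] [NormedSpace ℝ E]
  [NormedAddCommGroup F] [NormedSpace ℝ F]

lemma hasStrictFDerivAt_codRestrict {W : Submodule ℝ F} {f : E → F} {f' : E →L[ℝ] F} {a : E}
    (hf : HasStrictFDerivAt f f' a) (hW : ∀ x, f x ∈ W) (hW' : ∀ x, f' x ∈ W) :
    HasStrictFDerivAt (fun x => (⟨f x, hW x⟩ : W)) (f'.codRestrict W hW') a := by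
  rw [hasStrictFDerivAt_iff_isLittleO] at hf ⊢
  exact .of_norm_left hf.norm_left

lemma eventually_continuousAt_of_hasStrictFDerivAt {f : E → F} {f' : E →L[ℝ] F} {a : E}
    (hf : HasStrictFDerivAt f f' a) : ∀ᶠ x in 𝓝 a, ContinuousAt f x := by
  obtain ⟨K, s, hs, hK⟩ := hf.exists_lipschitzOnWith
  filter_upwards [eventually_mem_nhds_iff.2 hs] with x hx
  exact hK.continuousOn.continuousAt hx

lemma exists_curve_in_fibre_of_mem_ker [CompleteSpace E] [FiniteDimensional ℝ F]
    {f : E → F} {f' : E →L[ℝ] F} {a u : E} (hf : HasStrictFDerivAt f f' a)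
    (hf' : f'.range = ⊤) (hu : f' u = 0) :
    ∃ γ : ℝ → E, γ 0 = a ∧ HasStrictDerivAt γ u 0 ∧ ∀ᶠ t in 𝓝 0, f (γ t) = f a := by
  let ℓ : ℝ →L[ℝ] f'.ker := .toSpanSingleton ℝ ⟨u, hu⟩
  have hℓ0 : ℓ 0 = 0 := map_zero ℓ
  refine ⟨fun t => hf.implicitFunction f f' hf' (f a) (ℓ t), by simp, ?_, ?_⟩
  · have himplicit := hf.to_implicitFunction hf'
    rw [← hℓ0] at himplicit
    simpa [ℓ] using! (himplicit.comp (0 : ℝ) ℓ.hasStrictFDerivAt).hasStrictDerivAt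
  · have hlim : Tendsto (fun t => (f a, ℓ t)) (𝓝 0) (𝓝 (f a, 0)) :=
      hℓ0 ▸ (by fun_prop : Continuous fun t => (f a, ℓ t)).tendsto 0
    exact hlim.eventually (hf.map_implicitFunction_eq hf')

lemma exists_path_unitInterval_of_eventually {X : Type*} [TopologicalSpace X] {γ : ℝ → X}
    {P Q : X → Prop} (hγ : ∀ᶠ t in 𝓝 0, ContinuousAt γ t) (hP : ∀ᶠ t in 𝓝 0, P (γ t))
    (hQ : ∀ᶠ t in 𝓝[>] 0, Q (γ t)) :
    ∃ c : ℝ → X, ContinuousOn c (Icc 0 1) ∧ c 0 = γ 0 ∧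
      (∀ t ∈ Icc (0 : ℝ) 1, P (c t)) ∧ ∀ t ∈ Ioc (0 : ℝ) 1, Q (c t) := by
  obtain ⟨δ, hδ, hball⟩ := Metric.eventually_nhds_iff.1 (hγ.and hP)
  obtain ⟨η, hη, hIoc⟩ := mem_nhdsGT_iff_exists_Ioc_subset.1 hQ
  obtain ⟨ε, hε, hεlt⟩ := exists_between (lt_min hδ (mem_Ioi.1 hη))
  obtain ⟨hεδ, hεη⟩ := lt_min_iff.1 hεlt
  have hnear : ∀ t ∈ Icc (0 : ℝ) 1, ContinuousAt γ (ε * t) ∧ P (γ (ε * t)) := by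
    intro t ht
    apply hball
    rw [dist_zero_right, Real.norm_of_nonneg (mul_nonneg hε.le ht.1)]
    exact (mul_le_of_le_one_right hε.le ht.2).trans_lt hεδ
  refine ⟨fun t => γ (ε * t), fun t ht => ?_, by simp, fun t ht => (hnear t ht).2, fun t ht => ?_⟩
  · exact ((hnear t ht).1.comp (f := fun t => ε * t) (by fun_prop)).continuousWithinAt
  · exact hIoc ⟨mul_pos hε ht.1, (mul_le_of_le_one_right hε.le ht.2).trans hεη.le⟩

end Curves

section InfinitesimalIsometries

variable {E : Type*} [NormedAddCommGroup E] [InnerProductSpace ℝ E]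

lemma eventually_norm_ne_of_hasDerivAt {c : ℝ → E} {c' : E} {t₀ : ℝ} (hc : HasDerivAt c c' t₀)
    (hne : ⟪c t₀, c'⟫ ≠ 0) : ∀ᶠ t in 𝓝[≠] t₀, ‖c t‖ ≠ ‖c t₀‖ := by
  filter_upwards [hc.norm_sq.eventually_ne (c := ‖c t₀‖ ^ 2) (by simpa using hne)] with t ht heq
  exact ht (by rw [heq])

lemma exists_skew_linearMap_apply_eq {ι : Type*} {v w : ι → E}
    (hv : Submodule.span ℝ (range v) = ⊤) (hvw : ∀ i j, ⟪v i, w j⟫ = -⟪w i, v j⟫) :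
    ∃ A : E →ₗ[ℝ] E, (∀ x y, ⟪x, A y⟫ = -⟪A x, y⟫) ∧ ∀ i, A (v i) = w i := by
  let T : (ι →₀ ℝ) →ₗ[ℝ] E := Finsupp.linearCombination ℝ v
  let W : (ι →₀ ℝ) →ₗ[ℝ] E := Finsupp.linearCombination ℝ w
  have hT : LinearMap.range T = ⊤ := by rw [Finsupp.range_linearCombination, hv]
  have hTW : ∀ b c, ⟪T b, W c⟫ = -⟪W b, T c⟫ := by
    intro b c
    simp only [T, W, Finsupp.linearCombination_apply, Finsupp.sum, sum_inner, inner_sum,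
      real_inner_smul_left, real_inner_smul_right, hvw, mul_neg, Finset.sum_neg_distrib]
  have hker : ∀ c, T c = 0 → W c = 0 := by
    intro c hc
    obtain ⟨b, hb⟩ := LinearMap.range_eq_top.1 hT (W c)
    have hself : ⟪W c, W c⟫ = 0 := by
      nth_rw 1 [← hb]
      rw [hTW, hc, inner_zero_right, neg_zero]
    exact inner_self_eq_zero.1 hself
  obtain ⟨g, hg⟩ := T.exists_rightInverse_of_surjective hT
  have hWg : ∀ c, W (g (T c)) = W c := by
    intro c
    rw [← sub_eq_zero, ← map_sub]
    exact hker _ (by rw [map_sub, sub_eq_zero]; exact LinearMap.congr_fun hg (T c))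
  refine ⟨W ∘ₗ g, fun x y => ?_, fun i => ?_⟩
  · obtain ⟨b, rfl⟩ := LinearMap.range_eq_top.1 hT x
    obtain ⟨c, rfl⟩ := LinearMap.range_eq_top.1 hT y
    simpa only [LinearMap.comp_apply, hWg] using hTW b c
  · simpa [T, W] using hWg (Finsupp.single i 1)

lemma exists_skew_linearMap_add_of_inner_sub_eq_zero {V : Type*} {p u : V → E}
    (hspan : affineSpan ℝ (range p) = ⊤) (hu : ∀ i j, ⟪p i - p j, u i - u j⟫ = 0) :
    ∃ A : E →ₗ[ℝ] E, (∀ x y, ⟪x, A y⟫ = -⟪A x, y⟫) ∧ ∃ t, ∀ i, u i = A (p i) + t := by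
  obtain ⟨o⟩ : Nonempty V := by
    rw [← range_nonempty_iff_nonempty (f := p), ← affineSpan_nonempty ℝ, hspan]
    exact univ_nonempty
  have hdirections : Submodule.span ℝ (range fun i => p i - p o) = ⊤ := by
    rw [← AffineSubspace.direction_top ℝ E E, ← hspan, direction_affineSpan]
    exact (vectorSpan_range_eq_span_range_vsub_right ℝ p o).symm
  have hpolar : ∀ i j, ⟪p i - p o, u j - u o⟫ = -⟪u i - u o, p j - p o⟫ := by
    intro i j
    have hij : ⟪(p i - p o) - (p j - p o), (u i - u o) - (u j - u o)⟫ = 0 := by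
      simpa only [sub_sub_sub_cancel_right] using hu i j
    rw [inner_sub_left, inner_sub_right (p i - p o), inner_sub_right (p j - p o), hu i o, hu j o,
      real_inner_comm (u i - u o)] at hij
    linarith
  obtain ⟨A, hA, hAp⟩ := exists_skew_linearMap_apply_eq hdirections hpolar
  refine ⟨A, hA, u o - A (p o), fun i => ?_⟩
  rw [add_sub_left_comm, ← map_sub, hAp, add_sub_cancel]

lemma transpose_toEuclideanLin_symm_eq_neg {n : Type*} [Fintype n] [DecidableEq n]
    {A : EuclideanSpace ℝ n →ₗ[ℝ] EuclideanSpace ℝ n} (hA : ∀ x y, ⟪x, A y⟫ = -⟪A x, y⟫) :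
    (Matrix.toEuclideanLin.symm A).transpose = -Matrix.toEuclideanLin.symm A := by
  apply Matrix.toEuclideanLin.injective
  rw [← Matrix.conjTranspose_eq_transpose_of_trivial,
    Matrix.toEuclideanLin_conjTranspose_eq_adjoint, map_neg, LinearEquiv.apply_symm_apply,
    eq_comm, LinearMap.eq_adjoint_iff]
  intro x y
  rw [LinearMap.neg_apply, inner_neg_left, hA]

lemma exists_inner_sub_ne_zero_of_not_rigid {d : ℕ} {V : Type*} {p u : V → Euc d}
    (hspan : affineSpan ℝ (range p) = ⊤)
    (hu : ¬ ∃ A : Matrix (Fin d) (Fin d) ℝ, Matrix.transpose A = -A ∧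
      ∃ t : Euc d, ∀ i, u i = Matrix.toEuclideanLin A (p i) + t) :
    ∃ k l, ⟪p k - p l, u k - u l⟫ ≠ 0 := by
  by_contra! hall
  obtain ⟨A, hA, t, ht⟩ := exists_skew_linearMap_add_of_inner_sub_eq_zero hspan hall
  refine hu ⟨Matrix.toEuclideanLin.symm A, transpose_toEuclideanLin_symm_eq_neg hA, t, fun i => ?_⟩
  rw [LinearEquiv.apply_symm_apply, ht]

end InfinitesimalIsometries

section Rigidity

variable {V E : Type*} [NormedAddCommGroup E] [InnerProductSpace ℝ E]

/-- The squared edge lengths of the configuration `q`, as an edge weight. An edge weight is encoded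
as a vector indexed by ordered pairs of vertices which is zero off the edges, so every edge is
counted twice; the Euclidean structure serves to take orthogonal complements. -/
def sqEdgeLengths (G : SimpleGraph V) (q : V → E) : EuclideanSpace ℝ (V × V) :=
  WithLp.toLp 2 fun e => if G.Adj e.1 e.2 then ‖q e.1 - q e.2‖ ^ 2 else 0

/-- Twice the rigidity matrix of the framework `(G, p)`: the derivative of `sqEdgeLengths G`
at `p`. -/
def rigidityMap (G : SimpleGraph V) (p : V → E) : (V → E) →L[ℝ] EuclideanSpace ℝ (V × V) :=
  (EuclideanSpace.equiv (V × V) ℝ).symm.toContinuousLinearMap ∘L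
    ContinuousLinearMap.pi fun e =>
      if G.Adj e.1 e.2 then
        (2 • innerSL ℝ (p e.1 - p e.2)) ∘L
          (ContinuousLinearMap.proj (R := ℝ) (φ := fun _ => E) e.1 - ContinuousLinearMap.proj e.2)
      else 0

/-- The resultant at each vertex of the forces that the edge weight `ω` exerts along the edges of a
framework at `p`; it vanishes exactly when `ω` is a self-stress. -/
def resultantForce [Fintype V] (p : V → E) (ω : EuclideanSpace ℝ (V × V)) (i : V) : E :=
  ∑ j, ω (i, j) • (p i - p j)

lemma rigidityMap_apply (G : SimpleGraph V) (p u : V → E) (i j : V) :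
    rigidityMap G p u (i, j) = if G.Adj i j then 2 * ⟪p i - p j, u i - u j⟫ else 0 := by
  by_cases hij : G.Adj i j <;> simp [rigidityMap, hij, inner_sub_left, inner_sub_right, mul_sub]

lemma hasStrictFDerivAt_sqEdgeLengths [Finite V] (G : SimpleGraph V) (p : V → E) :
    HasStrictFDerivAt (sqEdgeLengths G) (rigidityMap G p) p := by
  have := Fintype.ofFinite V
  refine (EuclideanSpace.equiv (V × V) ℝ).symm.hasStrictFDerivAt.comp p
    (hasStrictFDerivAt_pi.2 fun e => ?_)
  split_ifs
  · exact (hasStrictFDerivAt_norm_sq (p e.1 - p e.2)).comp p (ContinuousLinearMap.hasStrictFDerivAt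
      (ContinuousLinearMap.proj (R := ℝ) (φ := fun _ => E) e.1 - ContinuousLinearMap.proj e.2))
  · exact hasStrictFDerivAt_const _ _

lemma inner_rigidityMap [Fintype V] {G : SimpleGraph V} {ω : EuclideanSpace ℝ (V × V)}
    (hcomm : ∀ i j, ω (i, j) = ω (j, i)) (hsupp : ∀ i j, ¬ G.Adj i j → ω (i, j) = 0)
    (p u : V → E) : ⟪ω, rigidityMap G p u⟫ = 4 * ∑ i, ⟪resultantForce p ω i, u i⟫ := by
  have hexpand : ⟪ω, rigidityMap G p u⟫ = ∑ i, ∑ j, 2 * (ω (i, j) * ⟪p i - p j, u i - u j⟫) := by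
    rw [PiLp.inner_apply, Fintype.sum_prod_type]
    refine Finset.sum_congr rfl fun i _ => Finset.sum_congr rfl fun j _ => ?_
    rw [rigidityMap_apply]
    split_ifs with hij
    · simp only [RCLike.inner_apply, conj_trivial]; ring
    · simp [hsupp i j hij]
  have hswap : ∑ i, ∑ j, ω (i, j) * ⟪p i - p j, u j⟫ =
      -∑ i, ∑ j, ω (i, j) * ⟪p i - p j, u i⟫ := by
    rw [Finset.sum_comm]
    simp only [← Finset.sum_neg_distrib]
    refine Finset.sum_congr rfl fun i _ => Finset.sum_congr rfl fun j _ => ?_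
    rw [hcomm j i, ← neg_sub (p i), inner_neg_left, mul_neg]
  simp only [hexpand, resultantForce, sum_inner, real_inner_smul_left, inner_sub_right, mul_sub,
    Finset.sum_sub_distrib, ← Finset.mul_sum, hswap]
  ring

end Rigidity

section Symmetry

variable {ι V E : Type*} [NormedAddCommGroup E] [InnerProductSpace ℝ E]

/-- The configurations `q` (equally, the velocity assignments) that are fully symmetric for a family
of symmetry operations, of which the operation `x` acts on space by `ρ x` and on vertices
by `σ x`. -/
def symmetricConfigurations (ρ : ι → E ≃ₗᵢ[ℝ] E) (σ : ι → Equiv.Perm V) :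
    Submodule ℝ (V → E) where
  carrier := {q | ∀ x i, ρ x (q i) = q (σ x i)}
  add_mem' hq hr x i := by simp [hq x i, hr x i]
  zero_mem' x i := by simp
  smul_mem' c q hq x i := by simp [hq x i]

instance [CompleteSpace E] (ρ : ι → E ≃ₗᵢ[ℝ] E) (σ : ι → Equiv.Perm V) :
    CompleteSpace (symmetricConfigurations ρ σ) := by
  have hclosed : IsClosed {q : V → E | ∀ x i, ρ x (q i) = q (σ x i)} := by
    simp only [ofPred_forall]
    exact isClosed_iInter fun x => isClosed_iInter fun i =>
      isClosed_eq ((ρ x).continuous.comp (continuous_apply i)) (continuous_apply _)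
  exact hclosed.completeSpace_coe

/-- The edge weights, in the encoding of `sqEdgeLengths`, that are constant on the orbits of edges
under the vertex permutations `σ x`. -/
def symmetricWeights (G : SimpleGraph V) (σ : ι → Equiv.Perm V) :
    Submodule ℝ (EuclideanSpace ℝ (V × V)) where
  carrier := {ω | (∀ i j, ω (i, j) = ω (j, i)) ∧ (∀ i j, ¬ G.Adj i j → ω (i, j) = 0) ∧
    ∀ x i j, ω (σ x i, σ x j) = ω (i, j)}
  add_mem' := fun ⟨hcomm, hsupp, hinv⟩ ⟨hcomm', hsupp', hinv'⟩ =>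
    ⟨fun i j => by simp [hcomm i j, hcomm' i j],
      fun i j hij => by simp [hsupp i j hij, hsupp' i j hij],
      fun x i j => by simp [hinv, hinv']⟩
  zero_mem' := by simp
  smul_mem' := fun c ω ⟨hcomm, hsupp, hinv⟩ =>
    ⟨fun i j => by simp [hcomm i j], fun i j hij => by simp [hsupp i j hij],
      fun x i j => by simp [hinv]⟩

variable {G : SimpleGraph V} {ρ : ι → E ≃ₗᵢ[ℝ] E} {σ : ι → Equiv.Perm V}

lemma sqEdgeLengths_mem_symmetricWeights (hσ : ∀ x i j, G.Adj (σ x i) (σ x j) ↔ G.Adj i j)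
    {q : V → E} (hq : q ∈ symmetricConfigurations ρ σ) :
    sqEdgeLengths G q ∈ symmetricWeights G σ := by
  refine ⟨fun i j => ?_, fun i j hij => ?_, fun x i j => ?_⟩
  · simp only [sqEdgeLengths, G.adj_comm i j, norm_sub_rev (q i)]
  · simp [sqEdgeLengths, hij]
  · simp only [sqEdgeLengths, hσ, ← hq x _, ← map_sub, LinearIsometryEquiv.norm_map]

lemma rigidityMap_mem_symmetricWeights (hσ : ∀ x i j, G.Adj (σ x i) (σ x j) ↔ G.Adj i j)
    {p u : V → E} (hp : p ∈ symmetricConfigurations ρ σ) (hu : u ∈ symmetricConfigurations ρ σ) :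
    rigidityMap G p u ∈ symmetricWeights G σ := by
  refine ⟨fun i j => ?_, fun i j hij => ?_, fun x i j => ?_⟩
  · simp only [rigidityMap_apply, G.adj_comm i j, ← neg_sub (p j), ← neg_sub (u j), inner_neg_neg]
  · simp [rigidityMap_apply, hij]
  · simp only [rigidityMap_apply, hσ, ← hp x _, ← hu x _, ← map_sub,
      LinearIsometryEquiv.inner_map_map]

lemma resultantForce_mem_symmetricConfigurations [Fintype V] {p : V → E}
    {ω : EuclideanSpace ℝ (V × V)} (hp : p ∈ symmetricConfigurations ρ σ)
    (hω : ω ∈ symmetricWeights G σ) :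
    resultantForce p ω ∈ symmetricConfigurations ρ σ := by
  intro x i
  simp only [resultantForce, map_sum, map_smul, map_sub, hp x _]
  rw [← Equiv.sum_comp (σ x) fun j => ω (σ x i, j) • (p (σ x i) - p j)]
  simp only [hω.2.2]

/-- `sqEdgeLengths` as a map from symmetric configurations to symmetric edge weights. -/
def symmetricSqEdgeLengths (hσ : ∀ x i j, G.Adj (σ x i) (σ x j) ↔ G.Adj i j)
    (q : symmetricConfigurations ρ σ) : symmetricWeights G σ :=
  ⟨sqEdgeLengths G q.1, sqEdgeLengths_mem_symmetricWeights hσ q.2⟩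

/-- The rigidity map at `p` from symmetric velocities to symmetric edge weights: a coordinate-free
form of the orbit rigidity matrix. -/
def symmetricRigidityMap (hσ : ∀ x i j, G.Adj (σ x i) (σ x j) ↔ G.Adj i j)
    (p : symmetricConfigurations ρ σ) :
    symmetricConfigurations ρ σ →L[ℝ] symmetricWeights G σ :=
  (rigidityMap G p ∘L (symmetricConfigurations ρ σ).subtypeL).codRestrict _
    fun u => rigidityMap_mem_symmetricWeights hσ p.2 u.2

lemma hasStrictFDerivAt_symmetricSqEdgeLengths [Finite V]
    (hσ : ∀ x i j, G.Adj (σ x i) (σ x j) ↔ G.Adj i j) (p : symmetricConfigurations ρ σ) :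
    HasStrictFDerivAt (symmetricSqEdgeLengths hσ) (symmetricRigidityMap hσ p) p := by
  have := Fintype.ofFinite V
  exact hasStrictFDerivAt_codRestrict ((hasStrictFDerivAt_sqEdgeLengths G p.1).comp p
    (symmetricConfigurations ρ σ).subtypeL.hasStrictFDerivAt)
    (fun q => sqEdgeLengths_mem_symmetricWeights hσ q.2)
    fun u => rigidityMap_mem_symmetricWeights hσ p.2 u.2

lemma norm_sub_eq_of_symmetricSqEdgeLengths_eq {hσ : ∀ x i j, G.Adj (σ x i) (σ x j) ↔ G.Adj i j}
    {q r : symmetricConfigurations ρ σ}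
    (hqr : symmetricSqEdgeLengths hσ q = symmetricSqEdgeLengths hσ r) {i j : V} (hij : G.Adj i j) :
    ‖q.1 i - q.1 j‖ = ‖r.1 i - r.1 j‖ := by
  have hsq := congrArg (fun ω => ω.1 (i, j)) hqr
  simp only [symmetricSqEdgeLengths, sqEdgeLengths, hij, if_true] at hsq
  exact (sq_eq_sq₀ (norm_nonneg _) (norm_nonneg _)).1 hsq

lemma symmetricRigidityMap_eq_zero (hσ : ∀ x i j, G.Adj (σ x i) (σ x j) ↔ G.Adj i j)
    {p u : symmetricConfigurations ρ σ}
    (hu : ∀ i j, G.Adj i j → ⟪p.1 i - p.1 j, u.1 i - u.1 j⟫ = 0) :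
    symmetricRigidityMap hσ p u = 0 := by
  ext ⟨i, j⟩
  change rigidityMap G p.1 u.1 (i, j) = 0
  rw [rigidityMap_apply]
  split_ifs with hij
  · rw [hu i j hij, mul_zero]
  · rfl

lemma range_symmetricRigidityMap_eq_top [Fintype V]
    (hσ : ∀ x i j, G.Adj (σ x i) (σ x j) ↔ G.Adj i j) {p : symmetricConfigurations ρ σ}
    (hstress : ∀ ω ∈ symmetricWeights G σ, resultantForce p.1 ω = 0 → ω = 0) :
    (symmetricRigidityMap hσ p).range = ⊤ := by
  rw [← Submodule.orthogonal_eq_bot_iff, Submodule.eq_bot_iff]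
  rintro ⟨ω, hω⟩ hperp
  have hforce : resultantForce p.1 ω ∈ symmetricConfigurations ρ σ :=
    resultantForce_mem_symmetricConfigurations p.2 hω
  have hpair : ⟪ω, rigidityMap G p.1 (resultantForce p.1 ω)⟫ = 0 :=
    (Submodule.mem_orthogonal' _ _).1 hperp _ ⟨⟨_, hforce⟩, rfl⟩
  rw [inner_rigidityMap hω.1 hω.2.1, mul_eq_zero_iff_left four_ne_zero,
    Finset.sum_eq_zero_iff_of_nonneg fun i _ => real_inner_self_nonneg] at hpair
  refine Subtype.ext (hstress ω hω (funext fun i => ?_))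
  exact inner_self_eq_zero.1 (hpair i (Finset.mem_univ i))

lemma eq_zero_of_resultantForce_eq_zero [Fintype V] [DecidableRel G.Adj] {p : V → E}
    (hnostress : ∀ ω : Sym2 V → ℝ,
      (∀ i, ∑ j ∈ G.neighborFinset i, ω s(i, j) • (p i - p j) = 0) →
      (∀ x, ∀ e ∈ G.edgeSet, ω (Sym2.map (σ x) e) = ω e) → ∀ e ∈ G.edgeSet, ω e = 0)
    {ω : EuclideanSpace ℝ (V × V)} (hω : ω ∈ symmetricWeights G σ)
    (hforce : resultantForce p ω = 0) : ω = 0 := by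
  obtain ⟨hcomm, hsupp, hinv⟩ := hω
  let stress : Sym2 V → ℝ := Sym2.lift ⟨fun i j => ω (i, j), hcomm⟩
  have hequilibrium : ∀ i, ∑ j ∈ G.neighborFinset i, stress s(i, j) • (p i - p j) = 0 := by
    intro i
    refine (Finset.sum_subset (Finset.subset_univ _) fun j _ hj => ?_).trans (congrFun hforce i)
    rw [SimpleGraph.mem_neighborFinset] at hj
    change ω (i, j) • (p i - p j) = 0
    rw [hsupp i j hj, zero_smul]
  have hsymm : ∀ x, ∀ e ∈ G.edgeSet, stress (Sym2.map (σ x) e) = stress e :=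
    fun x e _ => e.inductionOn fun i j => hinv x i j
  ext ⟨i, j⟩
  by_cases hij : G.Adj i j
  · exact hnostress stress hequilibrium hsymm s(i, j) hij
  · exact hsupp i j hij

end Symmetry

theorem stmt_3_general {ι V E : Type*} [Fintype V]
    [NormedAddCommGroup E] [InnerProductSpace ℝ E] [CompleteSpace E]
    (G : SimpleGraph V) [DecidableRel G.Adj] (ρ : ι → E ≃ₗᵢ[ℝ] E) (σ : ι → Equiv.Perm V)
    (hσ : ∀ x i j, G.Adj (σ x i) (σ x j) ↔ G.Adj i j)
    (p : V → E) (hp : ∀ x i, ρ x (p i) = p (σ x i))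
    (hnostress : ∀ ω : Sym2 V → ℝ,
      (∀ i, ∑ j ∈ G.neighborFinset i, ω s(i, j) • (p i - p j) = 0) →
      (∀ x, ∀ e ∈ G.edgeSet, ω (Sym2.map (σ x) e) = ω e) → ∀ e ∈ G.edgeSet, ω e = 0)
    (u : V → E) (husymm : ∀ x i, ρ x (u i) = u (σ x i))
    (hu : ∀ i j, G.Adj i j → ⟪p i - p j, u i - u j⟫ = 0)
    {k l : V} (hkl : ⟪p k - p l, u k - u l⟫ ≠ 0) :
    ∃ P : ℝ → V → E,
      ContinuousOn P (Icc 0 1) ∧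
      P 0 = p ∧
      (∀ t ∈ Icc (0 : ℝ) 1, ∀ i j, G.Adj i j → ‖P t i - P t j‖ = ‖p i - p j‖) ∧
      (∀ t ∈ Ioc (0 : ℝ) 1, ‖P t k - P t l‖ ≠ ‖p k - p l‖) ∧
      ∀ t ∈ Icc (0 : ℝ) 1, ∀ x i, ρ x (P t i) = P t (σ x i) := by
  let U := symmetricConfigurations ρ σ
  obtain ⟨γ, hγ0, hγ', hfibre⟩ := exists_curve_in_fibre_of_mem_ker (a := (⟨p, hp⟩ : U))
    (u := ⟨u, husymm⟩) (hasStrictFDerivAt_symmetricSqEdgeLengths hσ _)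
    (range_symmetricRigidityMap_eq_top hσ fun _ => eq_zero_of_resultantForce_eq_zero hnostress)
    (symmetricRigidityMap_eq_zero hσ hu)
  have hderiv : HasDerivAt (fun t => (γ t).1) u 0 :=
    U.subtypeL.hasFDerivAt.comp_hasDerivAt 0 hγ'.hasDerivAt
  have hflex : ∀ᶠ t in 𝓝[>] 0, ‖(γ t).1 k - (γ t).1 l‖ ≠ ‖p k - p l‖ := by
    have hne := eventually_norm_ne_of_hasDerivAt
      ((hasDerivAt_pi.1 hderiv k).sub (hasDerivAt_pi.1 hderiv l)) (by simpa [hγ0] using hkl)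
    simpa [hγ0] using hne.filter_mono (nhdsGT_le_nhdsNE 0)
  obtain ⟨c, hcont, hc0, hlengths, hne⟩ := exists_path_unitInterval_of_eventually
    (P := fun q : U => symmetricSqEdgeLengths hσ q = symmetricSqEdgeLengths hσ ⟨p, hp⟩)
    (Q := fun q : U => ‖q.1 k - q.1 l‖ ≠ ‖p k - p l‖)
    (eventually_continuousAt_of_hasStrictFDerivAt hγ'.hasStrictFDerivAt) hfibre hflex
  exact ⟨fun t => (c t).1, continuous_subtype_val.comp_continuousOn hcont, by simp only [hc0, hγ0],
    fun t ht i j hij => norm_sub_eq_of_symmetricSqEdgeLengths_eq (hlengths t ht) hij, hne,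
    fun t _ => (c t).2⟩

/-- Theorem 6.1 with the Remark 6.2 hypothesis, symmetric
Asimov–Roth theorem: an independent (no nonzero fully symmetric self-stress)
S-symmetric framework with a fully symmetric infinitesimal flex has a
symmetry-preserving finite flex. -/
theorem stmt_3 {d : ℕ} {V : Type*} [Fintype V] [DecidableEq V]
    (G : SimpleGraph V) [DecidableRel G.Adj]
    (S : Subgroup (Euc d ≃ₗᵢ[ℝ] Euc d)) [Finite S]
    (Φ : S →* Equiv.Perm V)
    (hΦadj : ∀ (x : S) (i j : V), G.Adj (Φ x i) (Φ x j) ↔ G.Adj i j)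
    (p : V → Euc d) (hp : Function.Injective p)
    (hsym : ∀ (x : S) (i : V), (x : Euc d ≃ₗᵢ[ℝ] Euc d) (p i) = p (Φ x i))
    (hspan : affineSpan ℝ (Set.range p) = ⊤)
    -- no nonzero fully (S,Φ)-symmetric self-stress
    (hnostress : ∀ ω : Sym2 V → ℝ,
      (∀ i : V, ∑ j ∈ G.neighborFinset i, ω s(i, j) • (p i - p j) = 0) →
      (∀ (x : S), ∀ e ∈ G.edgeSet, ω (Sym2.map (Φ x) e) = ω e) →
      ∀ e ∈ G.edgeSet, ω e = 0)
    -- a fully (S,Φ)-symmetric infinitesimal flex exists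
    (hflex : ∃ u : V → Euc d,
      (∀ (x : S) (i : V), (x : Euc d ≃ₗᵢ[ℝ] Euc d) (u i) = u (Φ x i)) ∧
      (∀ i j : V, G.Adj i j → (inner ℝ (p i - p j) (u i - u j) : ℝ) = 0) ∧
      ¬ (∃ A : Matrix (Fin d) (Fin d) ℝ, Matrix.transpose A = -A ∧
        ∃ t : Euc d, ∀ i, u i = Matrix.toEuclideanLin A (p i) + t)) :
    -- conclusion: a finite flex preserving the symmetry throughout the path
    ∃ P : ℝ → V → Euc d,
      ContinuousOn P (Set.Icc 0 1) ∧
      P 0 = p ∧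
      (∀ t ∈ Set.Icc (0:ℝ) 1, ∀ i j : V, G.Adj i j → ‖P t i - P t j‖ = ‖p i - p j‖) ∧
      (∃ k l : V, ∀ t ∈ Set.Ioc (0:ℝ) 1, ‖P t k - P t l‖ ≠ ‖p k - p l‖) ∧
      (∀ t ∈ Set.Icc (0:ℝ) 1, ∀ (x : S) (i : V),
        (x : Euc d ≃ₗᵢ[ℝ] Euc d) (P t i) = P t (Φ x i)) := by
  obtain ⟨u, husymm, hu, hnotrigid⟩ := hflex
  obtain ⟨k, l, hkl⟩ := exists_inner_sub_ne_zero_of_not_rigid hspan hnotrigid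
  obtain ⟨P, hcont, hP0, hlengths, hne, hPsymm⟩ := stmt_3_general G (fun x : S => x.1)
    (fun x => Φ x) hΦadj p hsym hnostress u husymm hu hkl
  exact ⟨P, hcont, hP0, hlengths, ⟨k, l, hne⟩, hPsymm⟩
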